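/- arXiv:2107.07277 — 2 statements merged into one kernel-verified Lean document; each statement's English description precedes it below -/
import Mathlib

section
/- Let P, Γ ∈ ℝ^{n×n} with P ≻ 0 and Γ ≻ 0, K ∈ ℝ^{m×n}, D ∈ ℝ^{m×m}. Then the symmetric block matrix [[P − (A+BK)ᵀP(A+BK) − Γ, ½Cᵀ − (A+BK)ᵀPF], [½C − FᵀP(A+BK), ½(D+Dᵀ) − FᵀPF]] is positive semidefinite if and only if M(P⁻¹, D, K P⁻¹, Γ⁻¹) is positive semidefinite. (The chain of congruence and Schur-complement equivalences in the proof of Lemma 1.) -/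
open Matrix

/-- The 4×4 block matrix M(E,S,G,H) from the paper's Lemma 1. -/
noncomputable def Mblock {n m : ℕ} (A : Matrix (Fin n) (Fin n) ℝ)
    (B F : Matrix (Fin n) (Fin m) ℝ) (C : Matrix (Fin m) (Fin n) ℝ)
    (E : Matrix (Fin n) (Fin n) ℝ) (S : Matrix (Fin m) (Fin m) ℝ)
    (G : Matrix (Fin m) (Fin n) ℝ) (H : Matrix (Fin n) (Fin n) ℝ) :
    Matrix ((Fin n ⊕ Fin m) ⊕ (Fin n ⊕ Fin n)) ((Fin n ⊕ Fin m) ⊕ (Fin n ⊕ Fin n)) ℝ :=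
  Matrix.fromBlocks
    (Matrix.fromBlocks E ((1 / 2 : ℝ) • (E * Cᵀ)) ((1 / 2 : ℝ) • (C * E))
      ((1 / 2 : ℝ) • (S + Sᵀ)))
    (Matrix.fromBlocks (A * E + B * G)ᵀ E Fᵀ 0)
    (Matrix.fromBlocks (A * E + B * G) F E 0)
    (Matrix.fromBlocks E 0 0 H)

/-!
With `L = A + BK`, the `2 × 2` matrix is the Schur complement of the block `diag(P⁻¹, Γ⁻¹)` in a
`4 × 4` matrix whose off-diagonal blocks are built from `L`, `F` and the identity, and whose `(1,1)`
block is `P`. Congruence by `diag(P⁻¹, 1, 1, 1)` then removes every occurrence of `P` in favour of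
`P⁻¹`.
-/

section FromBlocks

variable {𝕜 l m n : Type*}

theorem fromBlocks_sub_fromBlocks {α o : Type*} [AddGroup α] (A A' : Matrix n l α)
    (B B' : Matrix n m α) (C C' : Matrix o l α) (D D' : Matrix o m α) :
    fromBlocks A B C D - fromBlocks A' B' C' D' =
      fromBlocks (A - A') (B - B') (C - C') (D - D') := by
  simp only [sub_eq_add_neg, fromBlocks_neg, fromBlocks_add]

theorem inv_fromBlocks_zero_zero {α : Type*} [CommRing α] [Fintype m] [DecidableEq m] [Fintype n]
    [DecidableEq n] {A : Matrix m m α} {D : Matrix n n α} (hA : IsUnit A) (hD : IsUnit D) :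
    (fromBlocks A 0 0 D)⁻¹ = fromBlocks A⁻¹ 0 0 D⁻¹ := by
  simp [inv_fromBlocks_zero₂₁_of_isUnit_iff A 0 D (iff_of_true hA hD)]

theorem posDef_fromBlocks_zero_zero [Ring 𝕜] [PartialOrder 𝕜] [StarRing 𝕜] [AddLeftMono 𝕜]
    [Finite m] [Finite n] {A : Matrix m m 𝕜} {D : Matrix n n 𝕜} (hA : A.PosDef) (hD : D.PosDef) :
    (fromBlocks A 0 0 D).PosDef := by
  cases nonempty_fintype m
  cases nonempty_fintype n
  have isHermitian : (fromBlocks A 0 0 D).IsHermitian :=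
    hA.isHermitian.fromBlocks conjTranspose_zero hD.isHermitian
  refine .of_dotProduct_mulVec_pos isHermitian fun x hx => ?_
  obtain ⟨u, v, rfl⟩ : ∃ u v, x = Sum.elim u v := ⟨_, _, (Sum.elim_comp_inl_inr x).symm⟩
  have quadForm_eq : star (Sum.elim u v) ⬝ᵥ fromBlocks A 0 0 D *ᵥ Sum.elim u v =
      star u ⬝ᵥ A *ᵥ u + star v ⬝ᵥ D *ᵥ v := by
    simp [fromBlocks_mulVec, Function.star_sumElim]
  rw [quadForm_eq]
  by_cases hu : u = 0
  · have hv : v ≠ 0 := by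
      rintro rfl
      simp [hu] at hx
    simpa [hu] using hD.dotProduct_mulVec_pos hv
  · exact add_pos_of_pos_of_nonneg (hA.dotProduct_mulVec_pos hu)
      (hD.posSemidef.dotProduct_mulVec_nonneg v)

theorem posSemidef_fromBlocks_conjTranspose_mul_mul_iff [CommRing 𝕜] [PartialOrder 𝕜] [StarRing 𝕜]
    [Fintype m] [DecidableEq m] [Finite n] {U : Matrix m m 𝕜} (hU : IsUnit U)
    (A : Matrix m m 𝕜) (B : Matrix m n 𝕜) (C : Matrix n m 𝕜) (D : Matrix n n 𝕜) :
    (fromBlocks (Uᴴ * A * U) (Uᴴ * B) (C * U) D).PosSemidef ↔ (fromBlocks A B C D).PosSemidef := by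
  classical
  cases nonempty_fintype n
  have hU' : IsUnit (fromBlocks U 0 0 (1 : Matrix n n 𝕜)) :=
    isUnit_fromBlocks_zero₂₁.2 ⟨hU, isUnit_one⟩
  rw [← hU'.posSemidef_star_left_conjugate_iff (x := fromBlocks A B C D)]
  simp [star_eq_conjTranspose, fromBlocks_conjTranspose, fromBlocks_multiply]

variable [Field 𝕜] [PartialOrder 𝕜] [StarRing 𝕜] [StarOrderedRing 𝕜]
  [Fintype l] [DecidableEq l] [Finite m] [Fintype n] [DecidableEq n]

theorem posSemidef_fromBlocks_sub_iff_fromBlocks_inv {P : Matrix l l 𝕜} {Γ : Matrix n n 𝕜}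
    (hP : P.PosDef) (hΓ : Γ.PosDef) (L : Matrix l n 𝕜) (F : Matrix l m 𝕜)
    (Q : Matrix n n 𝕜) (S : Matrix n m 𝕜) (V : Matrix m n 𝕜) (R : Matrix m m 𝕜) :
    (fromBlocks (Q - Lᴴ * P * L - Γ) (S - Lᴴ * P * F)
      (V - Fᴴ * P * L) (R - Fᴴ * P * F)).PosSemidef ↔
    (fromBlocks (fromBlocks Q S V R) (fromBlocks Lᴴ 1 Fᴴ 0)
      (fromBlocks L F 1 0) (fromBlocks P⁻¹ 0 0 Γ⁻¹)).PosSemidef := by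
  have posDef_inv := posDef_fromBlocks_zero_zero hP.inv hΓ.inv
  have := posDef_inv.isUnit.invertible
  have inv_eq : (fromBlocks P⁻¹ 0 0 Γ⁻¹)⁻¹ = fromBlocks P 0 0 Γ := by
    rw [← inv_fromBlocks_zero_zero hP.isUnit hΓ.isUnit, nonsing_inv_nonsing_inv]
    exact (isUnit_iff_isUnit_det _).1 (posDef_fromBlocks_zero_zero hP hΓ).isUnit
  have schur := PosDef.fromBlocks₂₂ (fromBlocks Q S V R) (fromBlocks Lᴴ 1 Fᴴ 0) posDef_inv
  rw [inv_eq] at schur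
  simpa [fromBlocks_conjTranspose, fromBlocks_multiply, fromBlocks_sub_fromBlocks, sub_sub]
    using schur.symm

theorem stmt2_general {P Γ : Matrix n n 𝕜} (hP : P.PosDef) (hΓ : Γ.PosDef)
    (L : Matrix n n 𝕜) (F S : Matrix n m 𝕜) (V : Matrix m n 𝕜) (R : Matrix m m 𝕜) :
    (fromBlocks (P - Lᴴ * P * L - Γ) (S - Lᴴ * P * F)
      (V - Fᴴ * P * L) (R - Fᴴ * P * F)).PosSemidef ↔
    (fromBlocks (fromBlocks P⁻¹ (P⁻¹ * S) (V * P⁻¹) R) (fromBlocks (L * P⁻¹)ᴴ P⁻¹ Fᴴ 0)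
      (fromBlocks (L * P⁻¹) F P⁻¹ 0) (fromBlocks P⁻¹ 0 0 Γ⁻¹)).PosSemidef := by
  classical
  cases nonempty_fintype m
  have hU : IsUnit (fromBlocks P⁻¹ 0 0 (1 : Matrix m m 𝕜)) :=
    isUnit_fromBlocks_zero₂₁.2 ⟨hP.inv.isUnit, isUnit_one⟩
  have inv_mul : P⁻¹ * P = 1 := nonsing_inv_mul P ((isUnit_iff_isUnit_det P).1 hP.isUnit)
  rw [posSemidef_fromBlocks_sub_iff_fromBlocks_inv hP hΓ,
    ← posSemidef_fromBlocks_conjTranspose_mul_mul_iff hU]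
  simp [fromBlocks_conjTranspose, fromBlocks_multiply, hP.inv.isHermitian.eq, inv_mul]

end FromBlocks

/-- The chain of congruence and Schur-complement equivalences in the proof of Lemma 1:
for P ≻ 0 and Γ ≻ 0, the 2×2 passivity block matrix is PSD iff
M(P⁻¹, D, K P⁻¹, Γ⁻¹) is PSD. -/
theorem stmt2 (n m : ℕ)
    (A : Matrix (Fin n) (Fin n) ℝ) (B F : Matrix (Fin n) (Fin m) ℝ)
    (C : Matrix (Fin m) (Fin n) ℝ)
    (P Γ : Matrix (Fin n) (Fin n) ℝ) (K : Matrix (Fin m) (Fin n) ℝ)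
    (D : Matrix (Fin m) (Fin m) ℝ)
    (hP : P.PosDef) (hΓ : Γ.PosDef) :
    (Matrix.fromBlocks
      (P - (A + B * K)ᵀ * P * (A + B * K) - Γ)
      ((1 / 2 : ℝ) • Cᵀ - (A + B * K)ᵀ * P * F)
      ((1 / 2 : ℝ) • C - Fᵀ * P * (A + B * K))
      ((1 / 2 : ℝ) • (D + Dᵀ) - Fᵀ * P * F)).PosSemidef ↔
    (Mblock A B F C P⁻¹ D (K * P⁻¹) Γ⁻¹).PosSemidef := by
  simpa [Mblock, Matrix.add_mul, Matrix.mul_assoc] using stmt2_general hP hΓ (A + B * K) F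
    ((1 / 2 : ℝ) • Cᵀ) ((1 / 2 : ℝ) • C) ((1 / 2 : ℝ) • (D + Dᵀ))
end

section
/- Assume L̃ ⪰ 0 and fix ε₀ > 0. Suppose for each i ∈ {1,…,M} there exist E_i ∈ ℝ^{n_i×n_i} with E_i ≻ 0, a diagonal positive-definite H_i ∈ ℝ^{n_i×n_i}, a diagonal positive-definite S_i ∈ ℝ^{q×q}, and G_i ∈ ℝ^{q×n_i} such that: (i) M_i(E_i,S_i,G_i,H_i) ⪰ 0, where M_i is built from A_i, B_i, F_i, C_i; (ii) [H_i]_j ≤ 1/(|W_i|_j + ε₀) for all j ∈ {1,…,n_i}; (iii) [S_i]_k ≤ 1/|U_i|_k for all k ∈ {1,…,q} with |U_i|_k > 0. Then the decentralized control gains K_i = G_iE_i⁻¹ with D_i = S_i render the global closed loop asymptotically stable: for every x₀ ∈ ℝⁿ, (Ā − F̄L̃C)ᵏx₀ → 0 as k → ∞. (Paper's Theorem 1.) -/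
open Matrix Filter

/-- L̃ = L ⊗ I_q, viewed as a block matrix indexed by the sigma type Σ _ : Fin M, Fin q:
its (i,j) block is l_ij I_q. -/
def Ltilde {M q : ℕ} (L : Matrix (Fin M) (Fin M) ℝ) :
    Matrix (Σ _ : Fin M, Fin q) (Σ _ : Fin M, Fin q) ℝ :=
  fun a b => L a.1 b.1 * (if a.2 = b.2 then 1 else 0)

/-!
Each local matrix inequality is evaluated at the vector `(E⁻¹x, v, -E⁻¹x⁺, z)`, where
`x⁺ = (A + BGE⁻¹)x + Fv`. It becomes a strict passivity inequality with storage `xᵀE⁻¹x` for the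
output `Cx + Sv`. These inequalities add up over the subsystems, and in the global one we close the
loop with `v = -L̃Cx`. The cross term `vᵀCx` is then nonpositive because `L̃ ⪰ 0`. The
feed-through `vᵀSv` is at most `∑ⱼ |W|ⱼ xⱼ²` by Cauchy–Schwarz with weights `|U|`, since the row
sums of `|W|` are the column sums of `|U|`. The dissipation is at least `∑ⱼ (|W|ⱼ + ε₀) xⱼ²`, so
the storage drops by at least `ε₀ ∑ⱼ xⱼ²` at every step.
-/

section Diagonal

variable {m n R : Type*} [Fintype m] [Fintype n]

theorem dotProduct_mulVec_self_of_isDiag [CommSemiring R] {D : Matrix n n R} (hD : D.IsDiag)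
    (x : n → R) : x ⬝ᵥ D *ᵥ x = ∑ j, D j j * x j ^ 2 := by
  classical
  rw [← hD.diagonal_diag]
  simp only [dotProduct, mulVec_diagonal, diagonal_apply_eq]
  exact Finset.sum_congr rfl fun j _ => by ring

theorem sq_dotProduct_le_sum_abs_mul_sum [CommRing R] [LinearOrder R] [IsStrictOrderedRing R]
    (u x : n → R) : (u ⬝ᵥ x) ^ 2 ≤ (∑ j, |u j|) * ∑ j, |u j| * x j ^ 2 :=
  Finset.sum_sq_le_sum_mul_sum_of_sq_le_mul _ (fun _ _ => abs_nonneg _)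
    (fun _ _ => by positivity) fun j _ => by
      rw [mul_pow, ← sq_abs (u j), sq |u j|, mul_assoc]

variable [Field R] [LinearOrder R] [IsStrictOrderedRing R]

theorem mul_sq_dotProduct_le_sum_abs_mul_sq {u : n → R} {s : R}
    (hs : 0 < ∑ j, |u j| → s ≤ 1 / ∑ j, |u j|) (x : n → R) :
    s * (u ⬝ᵥ x) ^ 2 ≤ ∑ j, |u j| * x j ^ 2 := by
  have hcs := sq_dotProduct_le_sum_abs_mul_sum u x
  have hsum : 0 ≤ ∑ j, |u j| := Finset.sum_nonneg fun j _ => abs_nonneg (u j)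
  rcases hsum.eq_or_lt with hzero | hpos
  · have hux : (u ⬝ᵥ x) ^ 2 = 0 := le_antisymm (by simpa [← hzero] using hcs) (sq_nonneg _)
    rw [hux, mul_zero]
    exact Finset.sum_nonneg fun j _ => by positivity
  · calc s * (u ⬝ᵥ x) ^ 2 ≤ (1 / ∑ j, |u j|) * (u ⬝ᵥ x) ^ 2 := by gcongr; exact hs hpos
      _ ≤ ∑ j, |u j| * x j ^ 2 := by rwa [one_div, inv_mul_le_iff₀ hpos]

theorem dotProduct_mulVec_mulVec_le_sum_col_abs {U : Matrix m n R} {D : Matrix m m R}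
    (hD : D.IsDiag) (hDU : ∀ k, 0 < ∑ j, |U k j| → D k k ≤ 1 / ∑ j, |U k j|) (x : n → R) :
    (U *ᵥ x) ⬝ᵥ D *ᵥ (U *ᵥ x) ≤ ∑ j, (∑ k, |U k j|) * x j ^ 2 :=
  calc (U *ᵥ x) ⬝ᵥ D *ᵥ (U *ᵥ x) = ∑ k, D k k * (U k ⬝ᵥ x) ^ 2 :=
        dotProduct_mulVec_self_of_isDiag hD _
    _ ≤ ∑ k, ∑ j, |U k j| * x j ^ 2 :=
        Finset.sum_le_sum fun k _ => mul_sq_dotProduct_le_sum_abs_mul_sq (hDU k) x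
    _ = ∑ j, (∑ k, |U k j|) * x j ^ 2 := by
        rw [Finset.sum_comm]
        simp only [Finset.sum_mul]

-- `z = -(c * x)` would minimise `2 zᵀx + zᵀHz` if the entries of `H` were equal to `1 / c j`.
theorem two_mul_dotProduct_add_le_of_isDiag {H : Matrix n n R} (hH : H.IsDiag) {c : n → R}
    (hc : ∀ j, 0 < c j) (hHc : ∀ j, H j j ≤ 1 / c j) (x : n → R) :
    2 * (-(c * x) ⬝ᵥ x) + -(c * x) ⬝ᵥ H *ᵥ -(c * x) ≤ -∑ j, c j * x j ^ 2 := by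
  have hquad : -(c * x) ⬝ᵥ H *ᵥ -(c * x) ≤ ∑ j, c j * x j ^ 2 := by
    rw [dotProduct_mulVec_self_of_isDiag hH]
    refine Finset.sum_le_sum fun j _ => ?_
    have hcj := hc j
    calc H j j * (-(c * x)) j ^ 2 ≤ 1 / c j * (-(c * x)) j ^ 2 := by gcongr; exact hHc j
      _ = c j * x j ^ 2 := by
        simp only [Pi.neg_apply, Pi.mul_apply]
        field_simp
  have hlin : -(c * x) ⬝ᵥ x = -∑ j, c j * x j ^ 2 := by
    simp only [dotProduct, Pi.neg_apply, Pi.mul_apply, neg_mul, Finset.sum_neg_distrib, mul_assoc,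
      sq]
  linarith

end Diagonal

section BlockDiagonal

variable {ι R : Type*} {m n : ι → Type*}

theorem isDiag_blockDiagonal' [DecidableEq ι] [Zero R] {D : ∀ i, Matrix (n i) (n i) R}
    (hD : ∀ i, (D i).IsDiag) : (blockDiagonal' D).IsDiag := by
  rintro ⟨i, j⟩ ⟨i', j'⟩ hne
  by_cases hi : i = i'
  · subst hi
    rw [blockDiagonal'_apply_eq]
    exact hD i fun hj => hne (hj ▸ rfl)
  · exact blockDiagonal'_apply_ne D j j' hi

variable [Fintype ι] [∀ i, Fintype (n i)]

theorem dotProduct_sigma [NonUnitalNonAssocSemiring R] (x y : (Σ i, n i) → R) :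
    x ⬝ᵥ y = ∑ i, (fun j => x ⟨i, j⟩) ⬝ᵥ fun j => y ⟨i, j⟩ :=
  Fintype.sum_sigma _

theorem blockDiagonal'_mulVec_apply [DecidableEq ι] [NonUnitalNonAssocSemiring R]
    (X : ∀ i, Matrix (m i) (n i) R) (x : (Σ i, n i) → R) (i : ι) (j : m i) :
    (blockDiagonal' X *ᵥ x) ⟨i, j⟩ = (X i *ᵥ fun l => x ⟨i, l⟩) j := by
  simp only [mulVec, dotProduct, Fintype.sum_sigma]
  rw [Fintype.sum_eq_single i fun i' hi' => Finset.sum_eq_zero fun l _ => by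
    rw [blockDiagonal'_apply_ne X j l hi'.symm, zero_mul]]
  simp only [blockDiagonal'_apply_eq]

end BlockDiagonal

section Lyapunov

theorem tendsto_zero_of_succ_add_le {V w : ℕ → ℝ} (hV : ∀ k, 0 ≤ V k) (hw : ∀ k, 0 ≤ w k)
    (hdecr : ∀ k, V (k + 1) + w k ≤ V k) : Tendsto w atTop (nhds 0) := by
  have hanti : Antitone V := antitone_nat_of_succ_le fun k => by linarith [hdecr k, hw k]
  have hlim := tendsto_atTop_ciInf hanti ⟨0, Set.forall_mem_range.2 hV⟩
  have hdiff : Tendsto (fun k => V k - V (k + 1)) atTop (nhds 0) := by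
    simpa using hlim.sub (hlim.comp (tendsto_add_atTop_nat 1))
  exact squeeze_zero hw (fun k => by linarith [hdecr k]) hdiff

variable {n : Type*} [Fintype n]

theorem tendsto_zero_of_tendsto_dotProduct_self {α : Type*} {l : Filter α} {x : α → n → ℝ}
    (hx : Tendsto (fun a => x a ⬝ᵥ x a) l (nhds 0)) : Tendsto x l (nhds 0) := by
  refine tendsto_pi_nhds.2 fun j => squeeze_zero_norm (fun a => ?_) (by simpa using hx.sqrt)
  refine Real.abs_le_sqrt ?_
  rw [sq]
  exact Finset.single_le_sum (f := fun i => x a i * x a i) (fun i _ => mul_self_nonneg _)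
    (Finset.mem_univ j)

theorem tendsto_pow_mulVec_zero_of_lyapunov [DecidableEq n] {T : Matrix n n ℝ}
    {V : (n → ℝ) → ℝ} (hV : ∀ x, 0 ≤ V x) {ε : ℝ} (hε : 0 < ε)
    (hdecr : ∀ x, V (T *ᵥ x) + ε * (x ⬝ᵥ x) ≤ V x) (x₀ : n → ℝ) :
    Tendsto (fun k : ℕ => (T ^ k) *ᵥ x₀) atTop (nhds 0) := by
  refine tendsto_zero_of_tendsto_dotProduct_self ?_
  have hlim : Tendsto (fun k : ℕ => ε * ((T ^ k) *ᵥ x₀ ⬝ᵥ (T ^ k) *ᵥ x₀)) atTop (nhds 0) := by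
    refine tendsto_zero_of_succ_add_le (V := fun k => V ((T ^ k) *ᵥ x₀)) (fun k => hV _)
      (fun k => mul_nonneg hε.le ?_) fun k => ?_
    · exact Finset.sum_nonneg fun _ _ => mul_self_nonneg _
    · simpa only [pow_succ', mulVec_mulVec] using hdecr ((T ^ k) *ᵥ x₀)
  simpa [hε.ne'] using hlim.const_mul ε⁻¹

end Lyapunov

/-- Strict passivity of the system `x⁺ = Ax + Fv` with output `Cx + Dv`, storage function `xᵀPx`
and dissipation rate `xᵀH⁻¹x`. The rate enters through
`-xᵀH⁻¹x = min_z (2 zᵀx + zᵀHz)`, valid for `H ≻ 0`, so that `H` need not be inverted. -/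
def IsStrictlyPassive {n m : Type*} [Fintype n] [Fintype m] (A : Matrix n n ℝ) (F : Matrix n m ℝ)
    (C : Matrix m n ℝ) (D : Matrix m m ℝ) (P H : Matrix n n ℝ) : Prop :=
  ∀ (x : n → ℝ) (v : m → ℝ) (z : n → ℝ),
    (A *ᵥ x + F *ᵥ v) ⬝ᵥ P *ᵥ (A *ᵥ x + F *ᵥ v) ≤
      x ⬝ᵥ P *ᵥ x + v ⬝ᵥ (C *ᵥ x + D *ᵥ v) + (2 * (z ⬝ᵥ x) + z ⬝ᵥ H *ᵥ z)

section Mblock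

variable {n m : ℕ} {A E H : Matrix (Fin n) (Fin n) ℝ} {B F : Matrix (Fin n) (Fin m) ℝ}
  {C G : Matrix (Fin m) (Fin n) ℝ} {S : Matrix (Fin m) (Fin m) ℝ}

theorem dotProduct_Mblock_mulVec (hE : E.IsSymm) (a b z : Fin n → ℝ) (v : Fin m → ℝ) :
    Sum.elim (Sum.elim a v) (Sum.elim b z) ⬝ᵥ
        Mblock A B F C E S G H *ᵥ Sum.elim (Sum.elim a v) (Sum.elim b z) =
      a ⬝ᵥ E *ᵥ a + v ⬝ᵥ (C *ᵥ (E *ᵥ a) + S *ᵥ v)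
        + 2 * (b ⬝ᵥ ((A * E + B * G) *ᵥ a + F *ᵥ v)) + b ⬝ᵥ E *ᵥ b
        + (2 * (z ⬝ᵥ E *ᵥ a) + z ⬝ᵥ H *ᵥ z) := by
  have hEC : a ⬝ᵥ (E * Cᵀ) *ᵥ v = v ⬝ᵥ C *ᵥ (E *ᵥ a) := by
    rw [mulVec_mulVec, ← dotProduct_transpose_mulVec, transpose_mul, hE.eq,
      transpose_transpose]
  have hEz : a ⬝ᵥ E *ᵥ z = z ⬝ᵥ E *ᵥ a := by
    rw [← dotProduct_transpose_mulVec, hE.eq]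
  simp only [Mblock, fromBlocks_mulVec, Sum.elim_comp_inl, Sum.elim_comp_inr,
    sumElim_dotProduct_sumElim, smul_mulVec, zero_mulVec, add_zero, dotProduct_add,
    dotProduct_zero, dotProduct_smul, smul_eq_mul, dotProduct_transpose_mulVec, hEC, hEz,
    ← mulVec_mulVec _ C E, add_mulVec S]
  ring

theorem isStrictlyPassive_of_posSemidef_Mblock (hE : E.PosDef)
    (hM : (Mblock A B F C E S G H).PosSemidef) :
    IsStrictlyPassive (A + B * (G * E⁻¹)) F C S E⁻¹ H := by
  intro x v z
  have hdet : IsUnit E.det := (isUnit_iff_isUnit_det E).1 hE.isUnit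
  have hEinv (w : Fin n → ℝ) : E *ᵥ (E⁻¹ *ᵥ w) = w := by
    rw [mulVec_mulVec, mul_nonsing_inv _ hdet, one_mulVec]
  have hgain : (A * E + B * G) *ᵥ (E⁻¹ *ᵥ x) = (A + B * (G * E⁻¹)) *ᵥ x := by
    rw [mulVec_mulVec, Matrix.add_mul, mul_nonsing_inv_cancel_right _ _ hdet, Matrix.mul_assoc]
  have hform := hM.dotProduct_mulVec_nonneg (Sum.elim (Sum.elim (E⁻¹ *ᵥ x) v)
    (Sum.elim (-(E⁻¹ *ᵥ ((A + B * (G * E⁻¹)) *ᵥ x + F *ᵥ v))) z))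
  rw [star_trivial, dotProduct_Mblock_mulVec (isHermitian_iff_isSymm.1 hE.isHermitian), hgain]
    at hform
  simp only [mulVec_neg, hEinv, neg_dotProduct, dotProduct_neg, neg_neg] at hform
  rw [dotProduct_comm (_ + _) (E⁻¹ *ᵥ _), dotProduct_comm x (E⁻¹ *ᵥ x)]
  linarith

end Mblock

namespace IsStrictlyPassive

theorem blockDiagonal' {ι : Type*} [Fintype ι] [DecidableEq ι] {n m : ι → Type*}
    [∀ i, Fintype (n i)] [∀ i, Fintype (m i)] {A P H : ∀ i, Matrix (n i) (n i) ℝ}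
    {F : ∀ i, Matrix (n i) (m i) ℝ} {C : ∀ i, Matrix (m i) (n i) ℝ}
    {D : ∀ i, Matrix (m i) (m i) ℝ}
    (h : ∀ i, IsStrictlyPassive (A i) (F i) (C i) (D i) (P i) (H i)) :
    IsStrictlyPassive (Matrix.blockDiagonal' A) (Matrix.blockDiagonal' F)
      (Matrix.blockDiagonal' C) (Matrix.blockDiagonal' D) (Matrix.blockDiagonal' P)
      (Matrix.blockDiagonal' H) := by
  intro x v z
  simp only [dotProduct_sigma, Pi.add_apply, blockDiagonal'_mulVec_apply, Finset.mul_sum,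
    ← Finset.sum_add_distrib]
  exact Finset.sum_le_sum fun i _ =>
    h i (fun j => x ⟨i, j⟩) (fun k => v ⟨i, k⟩) fun j => z ⟨i, j⟩

variable {n m : Type*} [Fintype n] [Fintype m] {A P H : Matrix n n ℝ} {F : Matrix n m ℝ}
  {C : Matrix m n ℝ} {D : Matrix m m ℝ}

theorem feedback_add_le (h : IsStrictlyPassive A F C D P H) {Q : Matrix m m ℝ}
    (hQ : ∀ y, 0 ≤ y ⬝ᵥ Q *ᵥ y) (hD : D.IsDiag) (hH : H.IsDiag) {ε : ℝ} (hε : 0 < ε)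
    (hHbound : ∀ j, H j j ≤ 1 / (∑ k, |(Cᵀ * Qᵀ) j k| + ε))
    (hDbound : ∀ k, 0 < ∑ j, |(Q * C) k j| → D k k ≤ 1 / ∑ j, |(Q * C) k j|) (x : n → ℝ) :
    ((A - F * Q * C) *ᵥ x) ⬝ᵥ P *ᵥ ((A - F * Q * C) *ᵥ x) + ε * (x ⬝ᵥ x) ≤ x ⬝ᵥ P *ᵥ x := by
  set U := Q * C with hU
  set c : n → ℝ := fun j => ∑ k, |U k j| + ε with hc
  have hloop : (A - F * Q * C) *ᵥ x = A *ᵥ x + F *ᵥ -(U *ᵥ x) := by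
    rw [sub_mulVec, Matrix.mul_assoc, ← hU, mulVec_neg, mulVec_mulVec, sub_eq_add_neg]
  have hcross : 0 ≤ U *ᵥ x ⬝ᵥ C *ᵥ x := by
    rw [hU, ← mulVec_mulVec, dotProduct_comm]
    exact hQ _
  have hfeed := dotProduct_mulVec_mulVec_le_sum_col_abs hD hDbound x
  have hc_pos (j : n) : 0 < c j :=
    add_pos_of_nonneg_of_pos (Finset.sum_nonneg fun _ _ => abs_nonneg _) hε
  have hdiss := two_mul_dotProduct_add_le_of_isDiag hH hc_pos
    (by simpa only [← transpose_mul, transpose_apply] using hHbound) x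
  have hweights : ∑ j, c j * x j ^ 2 = ∑ j, (∑ k, |U k j|) * x j ^ 2 + ε * (x ⬝ᵥ x) := by
    simp only [hc, add_mul, Finset.sum_add_distrib, ← Finset.mul_sum, dotProduct, sq]
  have hpass := h x (-(U *ᵥ x)) (-(c * x))
  rw [← hloop, dotProduct_add, mulVec_neg _ D, neg_dotProduct_neg, neg_dotProduct _ (C *ᵥ x)]
    at hpass
  linarith

theorem tendsto_feedback_pow_mulVec_zero [DecidableEq n] (h : IsStrictlyPassive A F C D P H)
    (hP : ∀ x, 0 ≤ x ⬝ᵥ P *ᵥ x) {Q : Matrix m m ℝ} (hQ : ∀ y, 0 ≤ y ⬝ᵥ Q *ᵥ y) (hD : D.IsDiag)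
    (hH : H.IsDiag) {ε : ℝ} (hε : 0 < ε)
    (hHbound : ∀ j, H j j ≤ 1 / (∑ k, |(Cᵀ * Qᵀ) j k| + ε))
    (hDbound : ∀ k, 0 < ∑ j, |(Q * C) k j| → D k k ≤ 1 / ∑ j, |(Q * C) k j|) (x₀ : n → ℝ) :
    Tendsto (fun k : ℕ => ((A - F * Q * C) ^ k) *ᵥ x₀) atTop (nhds 0) :=
  tendsto_pow_mulVec_zero_of_lyapunov hP hε
    (h.feedback_add_le hQ hD hH hε hHbound hDbound) x₀

end IsStrictlyPassive

theorem stmt8_general {ι : Type*} [Fintype ι] [DecidableEq ι] {n p : ι → ℕ}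
    {A E H : ∀ i, Matrix (Fin (n i)) (Fin (n i)) ℝ}
    {B F : ∀ i, Matrix (Fin (n i)) (Fin (p i)) ℝ}
    {C G : ∀ i, Matrix (Fin (p i)) (Fin (n i)) ℝ}
    {S : ∀ i, Matrix (Fin (p i)) (Fin (p i)) ℝ}
    {Q : Matrix (Σ i, Fin (p i)) (Σ i, Fin (p i)) ℝ} (hQ : ∀ y, 0 ≤ y ⬝ᵥ Q *ᵥ y)
    {ε₀ : ℝ} (hε₀ : 0 < ε₀)
    (hE : ∀ i, (E i).PosDef) (hH : ∀ i, (H i).IsDiag) (hS : ∀ i, (S i).IsDiag)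
    (hM : ∀ i, (Mblock (A i) (B i) (F i) (C i) (E i) (S i) (G i) (H i)).PosSemidef)
    (hHbound : ∀ i j,
      H i j j ≤ 1 / (∑ k, |((blockDiagonal' C)ᵀ * Qᵀ) ⟨i, j⟩ k| + ε₀))
    (hSbound : ∀ i k, 0 < ∑ j, |(Q * blockDiagonal' C) ⟨i, k⟩ j| →
      S i k k ≤ 1 / ∑ j, |(Q * blockDiagonal' C) ⟨i, k⟩ j|)
    (x₀ : (Σ i, Fin (n i)) → ℝ) :
    Tendsto (fun k : ℕ =>
      ((blockDiagonal' (fun i => A i + B i * (G i * (E i)⁻¹)) -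
        blockDiagonal' F * Q * blockDiagonal' C) ^ k) *ᵥ x₀) atTop (nhds 0) := by
  have hpass := IsStrictlyPassive.blockDiagonal' fun i =>
    isStrictlyPassive_of_posSemidef_Mblock (hE i) (hM i)
  have hstorage (x : (Σ i, Fin (n i)) → ℝ) :
      0 ≤ x ⬝ᵥ blockDiagonal' (fun i => (E i)⁻¹) *ᵥ x := by
    simp only [dotProduct_sigma, blockDiagonal'_mulVec_apply]
    exact Finset.sum_nonneg fun i _ => by
      simpa using (hE i).inv.posSemidef.dotProduct_mulVec_nonneg fun j => x ⟨i, j⟩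
  refine hpass.tendsto_feedback_pow_mulVec_zero hstorage hQ (isDiag_blockDiagonal' hS)
    (isDiag_blockDiagonal' hH) hε₀ ?_ ?_ x₀
  · rintro ⟨i, j⟩
    simpa only [blockDiagonal'_apply_eq] using hHbound i j
  · rintro ⟨i, k⟩
    simpa only [blockDiagonal'_apply_eq] using hSbound i k

/-- Paper's Theorem 1: if L̃ ⪰ 0, ε₀ > 0, and for each subsystem the local constraints
(E_i ≻ 0, H_i and S_i diagonal positive definite, M_i(E_i,S_i,G_i,H_i) ⪰ 0, and the
diagonal bounds [H_i]_j ≤ 1/(|W_i|_j + ε₀) and [S_i]_k ≤ 1/|U_i|_k whenever |U_i|_k > 0)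
are feasible, then the decentralized gains K_i = G_iE_i⁻¹ (with D_i = S_i) render the
global closed loop x⁺ = (Ā − F̄L̃C)x asymptotically stable. -/
theorem stmt8 (M q : ℕ) (n : Fin M → ℕ)
    (A : ∀ i, Matrix (Fin (n i)) (Fin (n i)) ℝ)
    (B F : ∀ i, Matrix (Fin (n i)) (Fin q) ℝ)
    (C : ∀ i, Matrix (Fin q) (Fin (n i)) ℝ)
    (L : Matrix (Fin M) (Fin M) ℝ)
    (hL : (Ltilde (q := q) L).PosSemidef)
    (ε₀ : ℝ) (hε₀ : 0 < ε₀)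
    (E H : ∀ i, Matrix (Fin (n i)) (Fin (n i)) ℝ)
    (S : Fin M → Matrix (Fin q) (Fin q) ℝ)
    (G : ∀ i, Matrix (Fin q) (Fin (n i)) ℝ)
    (hE : ∀ i, (E i).PosDef)
    (hH : ∀ i, (H i).PosDef ∧ (H i).IsDiag)
    (hS : ∀ i, (S i).PosDef ∧ (S i).IsDiag)
    (hM : ∀ i, (Mblock (A i) (B i) (F i) (C i) (E i) (S i) (G i) (H i)).PosSemidef)
    (hHbound : ∀ i (j : Fin (n i)),
      H i j j ≤ 1 / ((∑ k, |((Matrix.blockDiagonal' C)ᵀ * (Ltilde (q := q) L)ᵀ)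
        ⟨i, j⟩ k|) + ε₀))
    (hSbound : ∀ i (k : Fin q),
      0 < (∑ j, |(Ltilde (q := q) L * Matrix.blockDiagonal' C) ⟨i, k⟩ j|) →
      S i k k ≤ 1 / (∑ j, |(Ltilde (q := q) L * Matrix.blockDiagonal' C) ⟨i, k⟩ j|)) :
    ∀ x₀ : (Σ i, Fin (n i)) → ℝ,
      Tendsto (fun k : ℕ =>
        ((Matrix.blockDiagonal' (fun i => A i + B i * (G i * (E i)⁻¹)) -
          Matrix.blockDiagonal' F * Ltilde (q := q) L * Matrix.blockDiagonal' C) ^ k) *ᵥ x₀)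
        atTop (nhds 0) := by
  exact stmt8_general (p := fun _ => q) (fun y => by simpa using hL.dotProduct_mulVec_nonneg y)
    hε₀ hE (fun i => (hH i).2) (fun i => (hS i).2) hM hHbound hSbound
end
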